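/- Let {e₁,e₂,e₃} be the standard orthonormal basis of V = ℝ³ and suppose (K,S) is in orthogonal-triple canonical form with parameters (λ,a,a,a) with λ > 0 (so S = aI). Then the stabilizer of (K,S) in SO(3) is exactly the order-12 subgroup generated by P₁, P₂ and Q, and this group is isomorphic to the alternating group A₄. -/

import Mathlib

/-!
Write `v₀ = (1,1,1)`, `v₁ = (1,-1,-1)`, `v₂ = (-1,1,-1)`, `v₃ = (-1,-1,1)` for the vertices of a
regular tetrahedron.  Every permutation `σ` of the vertices is induced by an orthogonal matrix
`tetM σ` with entries in `{-1, 0, 1}` and `det (tetM σ) = sign σ`, so `A₄` acts faithfully on `ℝ³`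
by rotations (`tetIso`).  The group asked for is the range of this action.

* It is generated by `P₁, P₂, Q`, because `A₄` is generated by the three corresponding permutations
  (`closure_alt`).
* It preserves `(K,S)`, because `P₁, P₂, Q` do: in coordinates
  `K(X,Y) = λ (X₂Y₃ + X₃Y₂, X₁Y₃ + X₃Y₁, X₁Y₂ + X₂Y₁)` (`K_coords`) and `S = a I`.
* Conversely let `g` preserve `(K,S)`.  From `K(g eᵢ, g eᵢ) = 0` any two coordinates of the unit
  vector `g eᵢ` have product zero, so `g eᵢ` is plus or minus a basis vector (`signed_unit`).
  Moreover `λ g e₃ = K(g e₁, g e₂)`, so `g` is determined by `g e₁` and `g e₂`.  The resulting `24`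
  matrices are the `tetM σ` (`tetM_surj`), and `det g = 1` singles out the even permutations.
-/


/-!
Setting (affine hypersurfaces admitting a pointwise symmetry, algebraic part):
`V₃ = ℝ³` with its standard inner product `h = ⟪·,·⟫`.  `K` is a symmetric bilinear
map `V₃ × V₃ → V₃` whose cubic form `h(K(X,Y),Z)` is totally symmetric and which
satisfies the apolarity condition (`K_X` trace-free), `S` is an `h`-symmetric
endomorphism.  `stab K S` is the stabilizer of the pair `(K,S)` inside `SO(3)`.
-/

noncomputable section

open scoped RealInnerProductSpace

/-- The 3-dimensional Euclidean space `ℝ³` with its standard inner product. -/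
abbrev V₃ := EuclideanSpace ℝ (Fin 3)

/-- A symmetric bilinear map `K` is admissible (a difference tensor) if the cubic form
`(X,Y,Z) ↦ ⟪K X Y, Z⟫` is totally symmetric and `K_X := K X ·` is trace-free for all `X`. -/
def IsAdmissibleK (K : V₃ →ₗ[ℝ] V₃ →ₗ[ℝ] V₃) : Prop :=
  (∀ X Y, K X Y = K Y X) ∧
  (∀ X Y Z, ⟪K X Y, Z⟫ = ⟪K X Z, Y⟫) ∧
  (∀ X, LinearMap.trace ℝ V₃ (K X) = 0)

/-- `S` is a symmetric endomorphism with respect to the inner product. -/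
def IsSymmEndo (S : V₃ →ₗ[ℝ] V₃) : Prop := ∀ X Y, ⟪S X, Y⟫ = ⟪X, S Y⟫

/-- The stabilizer of the pair `(K,S)` inside `SO(3)`: all orientation-preserving
(i.e. determinant `1`) linear isometries `g` of `ℝ³` with `K(gX,gY) = g(K(X,Y))`
and `S(gX) = g(SX)` for all `X, Y`. -/
def stab (K : V₃ →ₗ[ℝ] V₃ →ₗ[ℝ] V₃) (S : V₃ →ₗ[ℝ] V₃) : Set (V₃ ≃ₗᵢ[ℝ] V₃) :=
  {g | LinearMap.det (g.toLinearEquiv : V₃ →ₗ[ℝ] V₃) = 1 ∧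
    (∀ X Y, K (g X) (g Y) = g (K X Y)) ∧ (∀ X, S (g X) = g (S X))}

/-- The matrix of `g` with respect to the orthonormal basis `e`: column `j` consists of
the coordinates of `g (e j)` in the basis `e`. -/
def matrixOf (e : OrthonormalBasis (Fin 3) ℝ V₃) (g : V₃ ≃ₗᵢ[ℝ] V₃) :
    Matrix (Fin 3) (Fin 3) ℝ :=
  Matrix.of fun i j => ⟪e i, g (e j)⟫

/-- The standard orthonormal basis `{e₁, e₂, e₃}` of `ℝ³`. -/
def stdB : OrthonormalBasis (Fin 3) ℝ V₃ := EuclideanSpace.basisFun (Fin 3) ℝ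

/-- Matrix of the rotation by angle `θ` about the first basis vector `e₁`. -/
def rotMat (θ : ℝ) : Matrix (Fin 3) (Fin 3) ℝ :=
  !![1, 0, 0; 0, Real.cos θ, -Real.sin θ; 0, Real.sin θ, Real.cos θ]

/-- Matrix of the rotation by angle `π` about the axis `cos (θ/2) e₂ + sin (θ/2) e₃`
in the plane orthogonal to `e₁`. -/
def flipMat (θ : ℝ) : Matrix (Fin 3) (Fin 3) ℝ :=
  !![-1, 0, 0; 0, Real.cos θ, Real.sin θ; 0, Real.sin θ, -Real.cos θ]

/-- The set of all rotations about the axis `e 0` (the first vector of the basis `e`). -/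
def rotSet (e : OrthonormalBasis (Fin 3) ℝ V₃) : Set (V₃ ≃ₗᵢ[ℝ] V₃) :=
  {g | ∃ θ : ℝ, matrixOf e g = rotMat θ}

/-- The set of all rotations by angle `π` about axes orthogonal to `e 0`. -/
def flipSet (e : OrthonormalBasis (Fin 3) ℝ V₃) : Set (V₃ ≃ₗᵢ[ℝ] V₃) :=
  {g | ∃ θ : ℝ, matrixOf e g = flipMat θ}

/-- The whole of `SO(3)`, as a set of linear isometries of `ℝ³`. -/
def so3Set : Set (V₃ ≃ₗᵢ[ℝ] V₃) :=
  {g | LinearMap.det (g.toLinearEquiv : V₃ →ₗ[ℝ] V₃) = 1}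

/-- Matrix of `P₁`, the rotation by angle `π` about `e₁`. -/
def P1mat : Matrix (Fin 3) (Fin 3) ℝ := !![1, 0, 0; 0, -1, 0; 0, 0, -1]

/-- Matrix of `P₂`, the rotation by angle `π` about `e₂`. -/
def P2mat : Matrix (Fin 3) (Fin 3) ℝ := !![-1, 0, 0; 0, 1, 0; 0, 0, -1]

/-- Matrix of `P₃`, the rotation by angle `π` about `e₃`. -/
def P3mat : Matrix (Fin 3) (Fin 3) ℝ := !![-1, 0, 0; 0, -1, 0; 0, 0, 1]

/-- Matrix of `R₁`, the rotation by angle `2π/3` about `e₁`. -/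
def R1mat : Matrix (Fin 3) (Fin 3) ℝ :=
  !![1, 0, 0; 0, -(1/2), -(Real.sqrt 3/2); 0, Real.sqrt 3/2, -(1/2)]

/-- Matrix of `R₃`, the rotation by angle `2π/3` about `e₃`. -/
def R3mat : Matrix (Fin 3) (Fin 3) ℝ :=
  !![-(1/2), -(Real.sqrt 3/2), 0; Real.sqrt 3/2, -(1/2), 0; 0, 0, 1]

/-- Matrix of `Q`, the rotation by angle `2π/3` about the axis `e₁ + e₂ + e₃`
(the cyclic permutation `e₁ ↦ e₂ ↦ e₃ ↦ e₁`). -/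
def Qmat : Matrix (Fin 3) (Fin 3) ℝ := !![0, 0, 1; 1, 0, 0; 0, 1, 0]

/-- The matrices of the Klein four-group `{id, P₁, P₂, P₃} ≅ Z₂ × Z₂`. -/
def kleinMatSet : Set (Matrix (Fin 3) (Fin 3) ℝ) := {1, P1mat, P2mat, P3mat}

/-- The matrices of the order-6 group `⟨P₁, R₃⟩ ≅ S₃`. -/
def s3MatSet : Set (Matrix (Fin 3) (Fin 3) ℝ) :=
  {1, R3mat, R3mat * R3mat, P1mat, P1mat * R3mat, R3mat * P1mat}

/-- The matrices of the order-12 group `⟨P₁, P₂, Q⟩ ≅ A₄`. -/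
def a4MatSet : Set (Matrix (Fin 3) (Fin 3) ℝ) :=
  {1, P1mat, P2mat, P3mat, Qmat, Qmat * Qmat,
   P1mat * Qmat, P2mat * Qmat, P3mat * Qmat,
   Qmat * Qmat * P1mat, Qmat * Qmat * P2mat, Qmat * Qmat * P3mat}

/-- The matrices of the order-3 group `{id, R₁, R₁²} ≅ Z₃`. -/
def z3MatSet : Set (Matrix (Fin 3) (Fin 3) ℝ) := {1, R1mat, R1mat * R1mat}

/-- The matrices of the order-2 group `{id, P₁} ≅ Z₂`. -/
def z2MatSet : Set (Matrix (Fin 3) (Fin 3) ℝ) := {1, P1mat}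

/-- The pair `(K,S)` is in `Z₂`-canonical form with parameters `(lam, mu, a, b, c, d)`
with respect to the orthonormal basis `e`. -/
def Z2Form (K : V₃ →ₗ[ℝ] V₃ →ₗ[ℝ] V₃) (S : V₃ →ₗ[ℝ] V₃)
    (e : OrthonormalBasis (Fin 3) ℝ V₃) (lam mu a b c d : ℝ) : Prop :=
  K (e 0) (e 0) = (2*lam) • e 0 ∧
  K (e 0) (e 1) = (-lam) • e 1 + mu • e 2 ∧
  K (e 0) (e 2) = mu • e 1 + (-lam) • e 2 ∧
  K (e 1) (e 1) = (-lam) • e 0 ∧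
  K (e 1) (e 2) = mu • e 0 ∧
  K (e 2) (e 2) = (-lam) • e 0 ∧
  S (e 0) = a • e 0 ∧ S (e 1) = b • e 1 + d • e 2 ∧ S (e 2) = d • e 1 + c • e 2

/-- The pair `(K,S)` is in `Z₃`-canonical form with parameters `(lam, mu, a, b)`
with respect to the orthonormal basis `e`. -/
def Z3Form (K : V₃ →ₗ[ℝ] V₃ →ₗ[ℝ] V₃) (S : V₃ →ₗ[ℝ] V₃)
    (e : OrthonormalBasis (Fin 3) ℝ V₃) (lam mu a b : ℝ) : Prop :=
  K (e 0) (e 0) = (2*lam) • e 0 ∧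
  K (e 0) (e 1) = (-lam) • e 1 ∧
  K (e 0) (e 2) = (-lam) • e 2 ∧
  K (e 1) (e 1) = (-lam) • e 0 + mu • e 1 ∧
  K (e 1) (e 2) = (-mu) • e 2 ∧
  K (e 2) (e 2) = (-lam) • e 0 + (-mu) • e 1 ∧
  S (e 0) = a • e 0 ∧ S (e 1) = b • e 1 ∧ S (e 2) = b • e 2

/-- The pair `(K,S)` is in `SO(2)`-canonical form with parameters `(lam, a, b)`
with respect to the orthonormal basis `e`. -/
def SO2Form (K : V₃ →ₗ[ℝ] V₃ →ₗ[ℝ] V₃) (S : V₃ →ₗ[ℝ] V₃)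
    (e : OrthonormalBasis (Fin 3) ℝ V₃) (lam a b : ℝ) : Prop :=
  K (e 0) (e 0) = (2*lam) • e 0 ∧
  K (e 0) (e 1) = (-lam) • e 1 ∧
  K (e 0) (e 2) = (-lam) • e 2 ∧
  K (e 1) (e 1) = (-lam) • e 0 ∧
  K (e 1) (e 2) = 0 ∧
  K (e 2) (e 2) = (-lam) • e 0 ∧
  S (e 0) = a • e 0 ∧ S (e 1) = b • e 1 ∧ S (e 2) = b • e 2

/-- The pair `(K,S)` is in orthogonal-triple canonical form with parameters `(lam, a, b, c)`
with respect to the orthonormal basis `e`. -/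
def OTForm (K : V₃ →ₗ[ℝ] V₃ →ₗ[ℝ] V₃) (S : V₃ →ₗ[ℝ] V₃)
    (e : OrthonormalBasis (Fin 3) ℝ V₃) (lam a b c : ℝ) : Prop :=
  K (e 0) (e 0) = 0 ∧ K (e 1) (e 1) = 0 ∧ K (e 2) (e 2) = 0 ∧
  K (e 0) (e 1) = lam • e 2 ∧
  K (e 0) (e 2) = lam • e 1 ∧
  K (e 1) (e 2) = lam • e 0 ∧
  S (e 0) = a • e 0 ∧ S (e 1) = b • e 1 ∧ S (e 2) = c • e 2

/-- The pair `(K,S)` is in `S₃`-canonical form with parameters `(lam, a, b)`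
with respect to the orthonormal basis `e`. -/
def S3Form (K : V₃ →ₗ[ℝ] V₃ →ₗ[ℝ] V₃) (S : V₃ →ₗ[ℝ] V₃)
    (e : OrthonormalBasis (Fin 3) ℝ V₃) (lam a b : ℝ) : Prop :=
  K (e 0) (e 0) = lam • e 0 ∧
  K (e 0) (e 1) = (-lam) • e 1 ∧
  K (e 1) (e 1) = (-lam) • e 0 ∧
  K (e 0) (e 2) = 0 ∧ K (e 1) (e 2) = 0 ∧ K (e 2) (e 2) = 0 ∧
  S (e 0) = a • e 0 ∧ S (e 1) = a • e 1 ∧ S (e 2) = b • e 2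

/-! ### The action of `A₄` on the tetrahedron -/

/-- The vertices of a regular tetrahedron inscribed in the cube `{-1, 1}³`. -/
def tetV : Fin 4 → Fin 3 → ℤ := ![![1, 1, 1], ![1, -1, -1], ![-1, 1, -1], ![-1, -1, 1]]

/-- The matrix of the linear map sending each vertex `tetV k` to `tetV (σ k)`.  As
`∑ k, tetV k i * tetV k j = 4 δ i j`, it is `(1/4) ∑ k, tetV (σ k) (tetV k)ᵀ`; the integer division
is exact. -/
def tetM (σ : Equiv.Perm (Fin 4)) : Matrix (Fin 3) (Fin 3) ℤ :=
  .of fun i j => (∑ k, tetV (σ k) i * tetV k j) / 4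

theorem tetM_mul : ∀ σ τ, tetM (σ * τ) = tetM σ * tetM τ := by decide +kernel

theorem tetM_one : tetM 1 = 1 := by decide +kernel

theorem tetM_det : ∀ σ, (tetM σ).det = Equiv.Perm.sign σ := by decide +kernel

theorem tetM_mul_transpose : ∀ σ, tetM σ * (tetM σ).transpose = 1 := by decide +kernel

theorem tetM_eq_one : ∀ σ, tetM σ = 1 → σ = 1 := by decide +kernel

/-- Every signed permutation matrix with columns `s eᵢ`, `t eⱼ`, `s t eₖ`, where `{i, j, k}` is the
whole index set, is induced by a permutation of the vertices. -/
theorem tetM_surj : ∀ i j : Fin 3, i ≠ j → ∀ s t : ℤˣ, ∃ σ, ∀ r,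
    tetM σ r 0 = (if r = i then (s : ℤ) else 0) ∧
    tetM σ r 1 = (if r = j then (t : ℤ) else 0) ∧
    tetM σ r 2 = (if r ≠ i ∧ r ≠ j then (s : ℤ) * t else 0) := by decide +kernel

/-- The permutation of the vertices induced by `P₁`. -/
def permP1 : alternatingGroup (Fin 4) :=
  ⟨Equiv.swap 0 1 * Equiv.swap 2 3, Equiv.Perm.mem_alternatingGroup.2 (by decide)⟩

/-- The permutation of the vertices induced by `P₂`. -/
def permP2 : alternatingGroup (Fin 4) :=
  ⟨Equiv.swap 0 2 * Equiv.swap 1 3, Equiv.Perm.mem_alternatingGroup.2 (by decide)⟩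

/-- The permutation of the vertices induced by `Q`. -/
def permQ : alternatingGroup (Fin 4) :=
  ⟨Equiv.swap 1 2 * Equiv.swap 2 3, Equiv.Perm.mem_alternatingGroup.2 (by decide)⟩

theorem alt_eq_word : ∀ σ : alternatingGroup (Fin 4), ∃ i j : Fin 2, ∃ k : Fin 3,
    σ = permP1 ^ i.val * permP2 ^ j.val * permQ ^ k.val := by decide +kernel

theorem closure_alt :
    Subgroup.closure ({permP1, permP2, permQ} : Set (alternatingGroup (Fin 4))) = ⊤ := by
  rw [eq_top_iff]
  rintro σ -
  obtain ⟨i, j, k, rfl⟩ := alt_eq_word σ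
  refine mul_mem (mul_mem (pow_mem ?_ _) (pow_mem ?_ _)) (pow_mem ?_ _) <;>
    exact Subgroup.subset_closure (by simp)

/-- The action of `A₄` on the tetrahedron, as a homomorphism to orthogonal matrices. -/
def tetU : alternatingGroup (Fin 4) →* Matrix.unitaryGroup (Fin 3) ℝ where
  toFun σ := ⟨(tetM σ).map (Int.castRingHom ℝ), by
    rw [Matrix.mem_unitaryGroup_iff]
    have h := congrArg (fun A => A.map (Int.castRingHom ℝ)) (tetM_mul_transpose σ)
    simp only [Matrix.map_mul] at h
    rw [Matrix.star_eq_conjTranspose, Matrix.conjTranspose_eq_transpose_of_trivial,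
      ← Matrix.transpose_map, h]
    simp⟩
  map_one' := by
    refine Subtype.ext ?_
    exact (congrArg (Int.castRingHom ℝ).mapMatrix tetM_one).trans (map_one _)
  map_mul' σ τ := by
    refine Subtype.ext ?_
    exact (congrArg (Int.castRingHom ℝ).mapMatrix (tetM_mul σ τ)).trans (map_mul _ _ _)

/-- The action of `A₄` on the tetrahedron, as a homomorphism to linear isometries of `ℝ³`. -/
def tetIso : alternatingGroup (Fin 4) →* (V₃ ≃ₗᵢ[ℝ] V₃) :=
  Unitary.linearIsometryEquiv.toMonoidHom.comp
    ((Unitary.map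
      { toFun := Matrix.toEuclideanCLM (n := Fin 3) (𝕜 := ℝ)
        map_one' := map_one _
        map_mul' := map_mul _
        map_star' := map_star _ }).toMonoidHom.comp tetU)

theorem tetIso_apply (σ : alternatingGroup (Fin 4)) (X : V₃) (i : Fin 3) :
    tetIso σ X i = ∑ j, (tetM σ i j : ℝ) * X j := by
  rfl

/-! ### Matrices of isometries -/

theorem matrixOf_apply (g : V₃ ≃ₗᵢ[ℝ] V₃) (i j : Fin 3) :
    matrixOf stdB g i j = g (stdB j) i := by
  simp [matrixOf, stdB, EuclideanSpace.inner_single_left]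

theorem apply_eq_matrixOf (g : V₃ ≃ₗᵢ[ℝ] V₃) (X : V₃) (i : Fin 3) :
    g X i = ∑ j, matrixOf stdB g i j * X j := by
  conv_lhs => rw [← stdB.sum_repr X]
  simp only [matrixOf_apply]
  simp [stdB, mul_comm]

theorem matrixOf_injective : Function.Injective (matrixOf stdB) := by
  intro g h hgh
  ext X i
  rw [apply_eq_matrixOf, apply_eq_matrixOf, hgh]

theorem det_matrixOf (g : V₃ ≃ₗᵢ[ℝ] V₃) :
    (matrixOf stdB g).det = LinearMap.det (g.toLinearEquiv : V₃ →ₗ[ℝ] V₃) := by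
  rw [← LinearMap.det_toMatrix stdB.toBasis]
  congr 1
  ext i j
  rw [matrixOf_apply]
  simp [LinearMap.toMatrix_apply, stdB]

theorem matrixOf_tetIso (σ : alternatingGroup (Fin 4)) (i j : Fin 3) :
    matrixOf stdB (tetIso σ) i j = tetM σ i j := by
  rw [matrixOf_apply, tetIso_apply]
  fin_cases j <;> simp [stdB]

theorem matrixOf_permP1 : matrixOf stdB (tetIso permP1) = P1mat := by
  have h : tetM permP1 = !![1, 0, 0; 0, -1, 0; 0, 0, -1] := by decide +kernel
  ext i j
  rw [matrixOf_tetIso, h]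
  fin_cases i <;> fin_cases j <;> simp [P1mat]

theorem matrixOf_permP2 : matrixOf stdB (tetIso permP2) = P2mat := by
  have h : tetM permP2 = !![-1, 0, 0; 0, 1, 0; 0, 0, -1] := by decide +kernel
  ext i j
  rw [matrixOf_tetIso, h]
  fin_cases i <;> fin_cases j <;> simp [P2mat]

theorem matrixOf_permQ : matrixOf stdB (tetIso permQ) = Qmat := by
  have h : tetM permQ = !![0, 0, 1; 1, 0, 0; 0, 1, 0] := by decide +kernel
  ext i j
  rw [matrixOf_tetIso, h]
  fin_cases i <;> fin_cases j <;> simp [Qmat]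

theorem tetIso_injective : Function.Injective tetIso := by
  rw [injective_iff_map_eq_one]
  intro σ hσ
  refine Subtype.ext (tetM_eq_one _ ?_)
  ext i j
  have h := matrixOf_tetIso σ i j
  have h1 := matrixOf_tetIso 1 i j
  rw [hσ, ← map_one tetIso, h1] at h
  have h2 := (Int.cast_injective h).symm
  rwa [OneMemClass.coe_one, tetM_one] at h2

theorem range_tetIso : tetIso.range = Subgroup.closure
    {g | matrixOf stdB g ∈ ({P1mat, P2mat, Qmat} : Set (Matrix (Fin 3) (Fin 3) ℝ))} := by
  rw [MonoidHom.range_eq_map, ← closure_alt, MonoidHom.map_closure]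
  congr 1
  ext g
  simp only [Set.image_insert_eq, Set.image_singleton, Set.mem_insert_iff, Set.mem_singleton_iff,
    Set.mem_ofPred_eq, ← matrixOf_permP1, ← matrixOf_permP2, ← matrixOf_permQ,
    matrixOf_injective.eq_iff]

/-! ### The stabilizer -/

/-- The stabilizer of `(K,S)` in `SO(3)` as a subgroup of the isometry group. -/
def stabSubgroup (K : V₃ →ₗ[ℝ] V₃ →ₗ[ℝ] V₃) (S : V₃ →ₗ[ℝ] V₃) : Subgroup (V₃ ≃ₗᵢ[ℝ] V₃) where
  carrier := stab K S
  one_mem' := by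
    refine ⟨?_, fun _ _ => rfl, fun _ => rfl⟩
    exact LinearMap.det_id
  mul_mem' {g h} hg hh := by
    refine ⟨?_, fun X Y => ?_, fun X => ?_⟩
    · have : ((g * h).toLinearEquiv : V₃ →ₗ[ℝ] V₃) =
        (g.toLinearEquiv : V₃ →ₗ[ℝ] V₃) ∘ₗ (h.toLinearEquiv : V₃ →ₗ[ℝ] V₃) := rfl
      rw [this, LinearMap.det_comp, hg.1, hh.1, one_mul]
    · simp only [LinearIsometryEquiv.coe_mul, Function.comp_apply, hg.2.1, hh.2.1]
    · simp only [LinearIsometryEquiv.coe_mul, Function.comp_apply, hg.2.2, hh.2.2]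
  inv_mem' {g} hg := by
    have hi : ∀ X, g (g⁻¹ X) = X := g.apply_symm_apply
    refine ⟨?_, fun X Y => ?_, fun X => ?_⟩
    · have : (g.toLinearEquiv : V₃ →ₗ[ℝ] V₃) ∘ₗ (g⁻¹.toLinearEquiv : V₃ →ₗ[ℝ] V₃) =
        LinearMap.id := by
        ext1 X
        exact hi X
      have h := congrArg LinearMap.det this
      rwa [LinearMap.det_comp, hg.1, one_mul, LinearMap.det_id] at h
    · apply g.injective
      rw [← hg.2.1, hi, hi, hi]
    · apply g.injective
      rw [← hg.2.2, hi, hi]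

theorem vec_eq_sum (X : V₃) : X = X 0 • stdB 0 + X 1 • stdB 1 + X 2 • stdB 2 := by
  ext i
  fin_cases i <;> simp [stdB]

theorem K_coords {K : V₃ →ₗ[ℝ] V₃ →ₗ[ℝ] V₃} {S : V₃ →ₗ[ℝ] V₃} (hK : IsAdmissibleK K)
    {lam a : ℝ} (hform : OTForm K S stdB lam a a a) (X Y : V₃) :
    K X Y = (lam * (X 1 * Y 2 + X 2 * Y 1)) • stdB 0 + (lam * (X 0 * Y 2 + X 2 * Y 0)) • stdB 1
      + (lam * (X 0 * Y 1 + X 1 * Y 0)) • stdB 2 := by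
  obtain ⟨h00, h11, h22, h01, h02, h12, -⟩ := hform
  have h10 := (hK.1 (stdB 1) (stdB 0)).trans h01
  have h20 := (hK.1 (stdB 2) (stdB 0)).trans h02
  have h21 := (hK.1 (stdB 2) (stdB 1)).trans h12
  conv_lhs => rw [vec_eq_sum X, vec_eq_sum Y]
  simp only [map_add, map_smul, LinearMap.add_apply, LinearMap.smul_apply, h00, h11, h22, h01, h02,
    h12, h10, h20, h21]
  module

theorem S_eq_smul {K : V₃ →ₗ[ℝ] V₃ →ₗ[ℝ] V₃} {S : V₃ →ₗ[ℝ] V₃}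
    {lam a : ℝ} (hform : OTForm K S stdB lam a a a) (X : V₃) : S X = a • X := by
  obtain ⟨-, -, -, -, -, -, h0, h1, h2⟩ := hform
  conv_lhs => rw [vec_eq_sum X]
  conv_rhs => rw [vec_eq_sum X]
  simp only [map_add, map_smul, h0, h1, h2]
  module

theorem range_le_stab {K : V₃ →ₗ[ℝ] V₃ →ₗ[ℝ] V₃} {S : V₃ →ₗ[ℝ] V₃} (hK : IsAdmissibleK K)
    {lam a : ℝ} (hform : OTForm K S stdB lam a a a) : tetIso.range ≤ stabSubgroup K S := by
  rw [range_tetIso, Subgroup.closure_le]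
  intro g hg
  refine ⟨?_, fun X Y => ?_, fun X => by simp only [S_eq_smul hform, map_smul]⟩
  · rw [← det_matrixOf]
    rcases hg with h | h | h <;> rw [h] <;> simp [P1mat, P2mat, Qmat, Matrix.det_fin_three]
  · rw [K_coords hK hform, K_coords hK hform]
    ext i
    simp only [apply_eq_matrixOf g]
    rcases hg with h | h | h <;> rw [h] <;> fin_cases i <;>
      simp [P1mat, P2mat, Qmat, Fin.sum_univ_three, stdB, -mul_eq_mul_left_iff] <;> ring

/-- A unit vector whose coordinates have pairwise product zero is plus or minus a basis vector. -/
theorem signed_unit (x : Fin 3 → ℝ) (hn : x 0 ^ 2 + x 1 ^ 2 + x 2 ^ 2 = 1)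
    (h01 : x 0 * x 1 = 0) (h02 : x 0 * x 2 = 0) (h12 : x 1 * x 2 = 0) :
    ∃ (i : Fin 3) (s : ℤˣ), ∀ r, x r = if r = i then ((s : ℤ) : ℝ) else 0 := by
  have key : ∀ y : ℝ, y ^ 2 = 1 → ∃ s : ℤˣ, y = ((s : ℤ) : ℝ) := by
    intro y hy
    rcases mul_self_eq_one_iff.1 ((sq y).symm.trans hy) with h | h
    · exact ⟨1, by simp [h]⟩
    · exact ⟨-1, by simp [h]⟩
  by_cases h0 : x 0 = 0
  · by_cases h1 : x 1 = 0
    · obtain ⟨s, hs⟩ := key (x 2) (by simpa [h0, h1] using hn)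
      exact ⟨2, s, fun r => by fin_cases r <;> simp [h0, h1, hs]⟩
    · have h2 : x 2 = 0 := (mul_eq_zero.1 h12).resolve_left h1
      obtain ⟨s, hs⟩ := key (x 1) (by simpa [h0, h2] using hn)
      exact ⟨1, s, fun r => by fin_cases r <;> simp [h0, h2, hs]⟩
  · have h1 : x 1 = 0 := (mul_eq_zero.1 h01).resolve_left h0
    have h2 : x 2 = 0 := (mul_eq_zero.1 h02).resolve_left h0
    obtain ⟨s, hs⟩ := key (x 0) (by simpa [h1, h2] using hn)
    exact ⟨0, s, fun r => by fin_cases r <;> simp [h1, h2, hs]⟩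

theorem stab_le_range {K : V₃ →ₗ[ℝ] V₃ →ₗ[ℝ] V₃} {S : V₃ →ₗ[ℝ] V₃} (hK : IsAdmissibleK K)
    {lam a : ℝ} (hlam : 0 < lam) (hform : OTForm K S stdB lam a a a) :
    stabSubgroup K S ≤ tetIso.range := by
  rintro g ⟨hdet, hgK, -⟩
  have hl : lam ≠ 0 := hlam.ne'
  have hnorm : ∀ j, g (stdB j) 0 ^ 2 + g (stdB j) 1 ^ 2 + g (stdB j) 2 ^ 2 = 1 := by
    intro j
    have h : ‖g (stdB j)‖ = 1 := by rw [g.norm_map, stdB.norm_eq_one]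
    rw [EuclideanSpace.norm_eq, Real.sqrt_eq_one] at h
    simpa [Fin.sum_univ_three] using h
  have hcol : ∀ j, K (stdB j) (stdB j) = 0 → ∃ (i : Fin 3) (s : ℤˣ), ∀ r,
      g (stdB j) r = if r = i then ((s : ℤ) : ℝ) else 0 := by
    intro j hj
    have h := hgK (stdB j) (stdB j)
    rw [hj, map_zero, K_coords hK hform] at h
    have h0 := congrArg (fun v : V₃ => v 0) h
    have h1 := congrArg (fun v : V₃ => v 1) h
    have h2 := congrArg (fun v : V₃ => v 2) h
    simp [stdB, hl] at h0 h1 h2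
    refine signed_unit (g (stdB j)) (hnorm j) ?_ ?_ ?_ <;>
      simp only [stdB, EuclideanSpace.basisFun_apply] <;> linarith
  obtain ⟨i, s, hi⟩ := hcol 0 hform.1
  obtain ⟨j, t, hj⟩ := hcol 1 hform.2.1
  -- The third column is determined by the first two through `K (g e₁) (g e₂) = lam • g e₃`.
  have h2 : g (stdB 2) = (g (stdB 0) 1 * g (stdB 1) 2 + g (stdB 0) 2 * g (stdB 1) 1) • stdB 0
      + (g (stdB 0) 0 * g (stdB 1) 2 + g (stdB 0) 2 * g (stdB 1) 0) • stdB 1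
      + (g (stdB 0) 0 * g (stdB 1) 1 + g (stdB 0) 1 * g (stdB 1) 0) • stdB 2 := by
    have h := hgK (stdB 0) (stdB 1)
    rw [hform.2.2.2.1, map_smul, K_coords hK hform] at h
    refine smul_right_injective V₃ hl ?_
    simp only
    rw [← h]
    module
  have h2r : ∀ r, g (stdB 2) r =
      if r = 0 then g (stdB 0) 1 * g (stdB 1) 2 + g (stdB 0) 2 * g (stdB 1) 1
      else if r = 1 then g (stdB 0) 0 * g (stdB 1) 2 + g (stdB 0) 2 * g (stdB 1) 0
      else g (stdB 0) 0 * g (stdB 1) 1 + g (stdB 0) 1 * g (stdB 1) 0 := by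
    intro r
    conv_lhs => rw [h2]
    generalize g (stdB 0) = u
    generalize g (stdB 1) = w
    fin_cases r <;> simp [stdB]
  simp only [hi, hj] at h2r
  have hij : i ≠ j := by
    rintro rfl
    have hn := hnorm 2
    simp only [h2r] at hn
    fin_cases i <;> simp at hn
  obtain ⟨σ, hσ⟩ := tetM_surj i j hij s t
  have hM : matrixOf stdB g = (tetM σ).map (Int.castRingHom ℝ) := by
    ext r c
    obtain ⟨e0, e1, e2⟩ := hσ r
    rw [matrixOf_apply, Matrix.map_apply]
    fin_cases c
    · simp [hi, e0]
    · simp [hj, e1]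
    · simp only [Fin.reduceFinMk, h2r, e2]
      clear hi hj hσ e0 e1 e2 h2r
      fin_cases i <;> fin_cases j <;> first | exact absurd rfl hij | (fin_cases r <;> simp)
  have hsign : Equiv.Perm.sign σ = 1 := by
    rw [← det_matrixOf, hM, ← RingHom.mapMatrix_apply, ← RingHom.map_det, tetM_det] at hdet
    have h : ((Equiv.Perm.sign σ : ℤˣ) : ℤ) = 1 := by
      rw [eq_intCast] at hdet
      exact_mod_cast hdet
    exact Units.ext h
  refine ⟨⟨σ, Equiv.Perm.mem_alternatingGroup.2 hsign⟩, matrixOf_injective ?_⟩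
  ext r c
  rw [matrixOf_tetIso, hM]
  rfl

/-- if `(K,S)` is in orthogonal-triple canonical form with parameters
`(λ,a,a,a)`, `λ > 0`, in the standard basis, then the stabilizer of `(K,S)` in `SO(3)` is
exactly the order-12 subgroup generated by `P₁`, `P₂` and `Q`, and this group is
isomorphic to the alternating group `A₄`. -/
theorem statement_9 (K : V₃ →ₗ[ℝ] V₃ →ₗ[ℝ] V₃) (S : V₃ →ₗ[ℝ] V₃)
    (hK : IsAdmissibleK K) (hS : IsSymmEndo S)
    (lam a : ℝ) (hlam : 0 < lam) (hform : OTForm K S stdB lam a a a) :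
    ∃ H : Subgroup (V₃ ≃ₗᵢ[ℝ] V₃), (H : Set (V₃ ≃ₗᵢ[ℝ] V₃)) = stab K S ∧
      H = Subgroup.closure
        {g | matrixOf stdB g ∈ ({P1mat, P2mat, Qmat} : Set (Matrix (Fin 3) (Fin 3) ℝ))} ∧
      Nat.card H = 12 ∧
      Nonempty (H ≃* alternatingGroup (Fin 4)) := by
  let φ := MonoidHom.ofInjective tetIso_injective
  refine ⟨tetIso.range, ?_, range_tetIso, ?_, ⟨φ.symm⟩⟩
  · exact congrArg SetLike.coe (le_antisymm (range_le_stab hK hform) (stab_le_range hK hlam hform))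
  · rw [← Nat.card_congr φ.toEquiv, Nat.card_eq_fintype_card]
    decide +kernel
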